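/- arXiv:1210.8413 — 2 statements merged into one kernel-verified Lean document; each statement's English description precedes it below -/
import Mathlib

section
/- Let K be a field and c, d, q₁, q₂ ∈ Kˣ. Then R(d, c, q₁⁻¹, q₂) is isomorphic to R(c, d, q₁, q₂) as K-algebras; an isomorphism is given by x₁ ↦ q₁·y₃, x₂ ↦ y₂, x₃ ↦ y₁, x₄ ↦ y₄, where x₁,…,x₄ are the generators of the source and y₁,…,y₄ those of the target. -/
/-- The defining relations of Jordan's ambiskew polynomial ring `R(a,b,p₁,p₂)`,
with generators `x₁ = ι 0`, `x₂ = ι 1`, `x₃ = ι 2`, `x₄ = ι 3`: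
`x₄x₁ = a·x₁x₄`, `x₂x₁ = p₁⁻¹a⁻¹·x₁x₂`, `x₁x₃ = p₁·x₃x₁`, `x₄x₃ = b·x₃x₄`,
`x₂x₃ = p₁b⁻¹·x₃x₂`, `x₂x₄ = p₂·x₄x₂ + (1 - p₂ab)·x₁x₃`. -/
inductive AmbRel (K : Type*) [Field K] (a b p₁ p₂ : K) :
    FreeAlgebra K (Fin 4) → FreeAlgebra K (Fin 4) → Prop
  | r41 : AmbRel K a b p₁ p₂ (FreeAlgebra.ι K 3 * FreeAlgebra.ι K 0)
      (a • (FreeAlgebra.ι K 0 * FreeAlgebra.ι K 3))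
  | r21 : AmbRel K a b p₁ p₂ (FreeAlgebra.ι K 1 * FreeAlgebra.ι K 0)
      ((p₁⁻¹ * a⁻¹) • (FreeAlgebra.ι K 0 * FreeAlgebra.ι K 1))
  | r13 : AmbRel K a b p₁ p₂ (FreeAlgebra.ι K 0 * FreeAlgebra.ι K 2)
      (p₁ • (FreeAlgebra.ι K 2 * FreeAlgebra.ι K 0))
  | r43 : AmbRel K a b p₁ p₂ (FreeAlgebra.ι K 3 * FreeAlgebra.ι K 2)
      (b • (FreeAlgebra.ι K 2 * FreeAlgebra.ι K 3))
  | r23 : AmbRel K a b p₁ p₂ (FreeAlgebra.ι K 1 * FreeAlgebra.ι K 2)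
      ((p₁ * b⁻¹) • (FreeAlgebra.ι K 2 * FreeAlgebra.ι K 1))
  | r24 : AmbRel K a b p₁ p₂ (FreeAlgebra.ι K 1 * FreeAlgebra.ι K 3)
      (p₂ • (FreeAlgebra.ι K 3 * FreeAlgebra.ι K 1) +
        (1 - p₂ * a * b) • (FreeAlgebra.ι K 0 * FreeAlgebra.ι K 2))

/-- Jordan's ambiskew polynomial ring `R(a,b,p₁,p₂)`. -/
abbrev Ambiskew (K : Type*) [Field K] (a b p₁ p₂ : K) := RingQuot (AmbRel K a b p₁ p₂)

/-- The images of the four free generators in `R(a,b,p₁,p₂)`;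
`agen K a b p₁ p₂ i` is the generator `x_{i+1}`. -/
noncomputable def agen (K : Type*) [Field K] (a b p₁ p₂ : K) (i : Fin 4) :
    Ambiskew K a b p₁ p₂ :=
  RingQuot.mkAlgHom K (AmbRel K a b p₁ p₂) (FreeAlgebra.ι K i)

/-! The relations are symmetric under interchanging `x₁` and `x₃` together with `a ↔ b` and
`p₁ ↔ p₁⁻¹`, except that in the relation for `x₂x₄` the term `x₁x₃` turns into
`x₃x₁ = p₁⁻¹x₁x₃`. Rescaling `x₁` and `x₃` by factors with product `p₁` repairs this defect and
leaves the other relations intact, as those are homogeneous in `x₁` and in `x₃`. The universal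
property turns such a rescaled swap into a homomorphism, and the rescaled swap with inverse factors
into its inverse. -/

namespace Ambiskew

variable {K : Type*} [Field K] {A B : Type*} [Semiring A] [Algebra K A] [Semiring B] [Algebra K B]

/-- The quadruple `x` in a `K`-algebra satisfies the defining relations of `R(a,b,p₁,p₂)`, with
`x i` standing for `x_{i+1}`; algebra homomorphisms out of `R(a,b,p₁,p₂)` correspond to such
quadruples. -/
structure Relations (a b p₁ p₂ : K) (x : Fin 4 → A) : Prop where
  r41 : x 3 * x 0 = a • (x 0 * x 3)
  r21 : x 1 * x 0 = (p₁⁻¹ * a⁻¹) • (x 0 * x 1)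
  r13 : x 0 * x 2 = p₁ • (x 2 * x 0)
  r43 : x 3 * x 2 = b • (x 2 * x 3)
  r23 : x 1 * x 2 = (p₁ * b⁻¹) • (x 2 * x 1)
  r24 : x 1 * x 3 = p₂ • (x 3 * x 1) + (1 - p₂ * a * b) • (x 0 * x 2)

section UniversalProperty

variable {a b p₁ p₂ : K}

theorem relations_agen : Relations a b p₁ p₂ (agen K a b p₁ p₂) := by
  constructor <;> simp only [agen, ← map_mul, ← map_smul, ← map_add]
  exacts [RingQuot.mkAlgHom_rel K .r41, RingQuot.mkAlgHom_rel K .r21,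
    RingQuot.mkAlgHom_rel K .r13, RingQuot.mkAlgHom_rel K .r43,
    RingQuot.mkAlgHom_rel K .r23, RingQuot.mkAlgHom_rel K .r24]

theorem Relations.lift_eq_lift {x : Fin 4 → A} (hx : Relations a b p₁ p₂ x)
    ⦃u v : FreeAlgebra K (Fin 4)⦄ (huv : AmbRel K a b p₁ p₂ u v) :
    FreeAlgebra.lift K x u = FreeAlgebra.lift K x v := by
  cases huv <;> simp only [map_mul, map_smul, map_add, FreeAlgebra.lift_ι_apply]
  exacts [hx.r41, hx.r21, hx.r13, hx.r43, hx.r23, hx.r24]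

/-- The homomorphism out of `R(a,b,p₁,p₂)` given by its universal property: it sends the
generators to a prescribed quadruple satisfying the defining relations. -/
noncomputable def lift {x : Fin 4 → A} (hx : Relations a b p₁ p₂ x) :
    Ambiskew K a b p₁ p₂ →ₐ[K] A :=
  RingQuot.liftAlgHom K ⟨FreeAlgebra.lift K x, hx.lift_eq_lift⟩

theorem lift_comp_agen {x : Fin 4 → A} (hx : Relations a b p₁ p₂ x) :
    lift hx ∘ agen K a b p₁ p₂ = x := by
  funext i
  simp only [Function.comp_apply, lift, agen, RingQuot.liftAlgHom_mkAlgHom_apply,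
    FreeAlgebra.lift_ι_apply]

theorem algHom_ext {f g : Ambiskew K a b p₁ p₂ →ₐ[K] A}
    (h : f ∘ agen K a b p₁ p₂ = g ∘ agen K a b p₁ p₂) : f = g :=
  RingQuot.ringQuot_ext' K f g (FreeAlgebra.hom_ext h)

end UniversalProperty

section ScaledSwap

/-- The quadruple obtained from `x` by interchanging the first and third entries and rescaling
them: `(s·x₃, x₂, t·x₁, x₄)`. -/
def scaledSwap (s t : K) (x : Fin 4 → A) : Fin 4 → A :=
  ![s • x 2, x 1, t • x 0, x 3]

theorem scaledSwap_scaledSwap {s t s' t' : K} (hs : s' * t = 1) (ht : t' * s = 1)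
    (x : Fin 4 → A) : scaledSwap s' t' (scaledSwap s t x) = x := by
  funext i
  fin_cases i <;> simp [scaledSwap, smul_smul, hs, ht]

theorem comp_scaledSwap (f : A →ₐ[K] B) (s t : K) (x : Fin 4 → A) :
    f ∘ scaledSwap s t x = scaledSwap s t (f ∘ x) := by
  funext i
  fin_cases i <;> simp [scaledSwap]

theorem Relations.scaledSwap {a b p₁ p₂ s t : K} {x : Fin 4 → A}
    (hx : Relations a b p₁ p₂ x) (hst : s * t = p₁) :
    Relations b a p₁⁻¹ p₂ (scaledSwap s t x) := by
  constructor <;>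
    simp only [Ambiskew.scaledSwap, Matrix.cons_val, smul_mul_assoc, mul_smul_comm, smul_smul]
  case r41 => rw [hx.r43, smul_smul, mul_comm]
  case r21 => rw [hx.r23, smul_smul, inv_inv, mul_comm]
  case r13 => rw [hx.r13, smul_smul, mul_comm t s, hst, inv_mul_mul_self]
  case r43 => rw [hx.r41, smul_smul, mul_comm]
  case r23 => rw [hx.r21, smul_smul, mul_comm]
  case r24 => rw [hx.r24, hx.r13, smul_smul, mul_comm t s, hst, mul_right_comm p₂ b a]

theorem Relations.scaledSwap_inv {a b p₁ p₂ : K} {s t : Kˣ} {x : Fin 4 → A}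
    (hx : Relations b a p₁⁻¹ p₂ x) (hst : (s * t : K) = p₁) :
    Relations a b p₁ p₂ (Ambiskew.scaledSwap (↑t⁻¹ : K) (↑s⁻¹ : K) x) := by
  have hinv : (↑t⁻¹ * ↑s⁻¹ : K) = p₁⁻¹ := by
    rw [← hst, mul_inv_rev, Units.val_inv_eq_inv_val, Units.val_inv_eq_inv_val]
  simpa only [inv_inv] using hx.scaledSwap hinv

theorem lift_scaledSwap_comp_lift_scaledSwap {a b p₁ p₂ a' b' p₁' p₂' s t s' t' : K}
    (hx : Relations a b p₁ p₂ (scaledSwap s t (agen K a' b' p₁' p₂')))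
    (hy : Relations a' b' p₁' p₂' (scaledSwap s' t' (agen K a b p₁ p₂)))
    (hs : s * t' = 1) (ht : t * s' = 1) :
    (lift hy).comp (lift hx) = AlgHom.id K (Ambiskew K a b p₁ p₂) := by
  apply algHom_ext
  calc (lift hy).comp (lift hx) ∘ agen K a b p₁ p₂
      = lift hy ∘ scaledSwap s t (agen K a' b' p₁' p₂') :=
        congrArg (lift hy ∘ ·) (lift_comp_agen hx)
    _ = scaledSwap s t (scaledSwap s' t' (agen K a b p₁ p₂)) := by
      rw [comp_scaledSwap, lift_comp_agen]
    _ = agen K a b p₁ p₂ := scaledSwap_scaledSwap hs ht _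

/-- The isomorphism `R(b,a,p₁⁻¹,p₂) ≅ R(a,b,p₁,p₂)` attached to a factorisation `p₁ = st`, sending
the generators to the rescaled swap `(s·x₃, x₂, t·x₁, x₄)`. -/
noncomputable def scaledSwapEquiv (a b p₂ : K) {p₁ : K} {s t : Kˣ} (hst : (s * t : K) = p₁) :
    Ambiskew K b a p₁⁻¹ p₂ ≃ₐ[K] Ambiskew K a b p₁ p₂ :=
  AlgEquiv.ofAlgHom
    (lift (relations_agen.scaledSwap hst)) (lift (relations_agen.scaledSwap_inv hst))
    (lift_scaledSwap_comp_lift_scaledSwap _ _ t.inv_mul s.inv_mul)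
    (lift_scaledSwap_comp_lift_scaledSwap _ _ s.mul_inv t.mul_inv)

theorem scaledSwapEquiv_agen (a b p₂ : K) {p₁ : K} {s t : Kˣ} (hst : (s * t : K) = p₁)
    (i : Fin 4) :
    scaledSwapEquiv a b p₂ hst (agen K b a p₁⁻¹ p₂ i) =
      scaledSwap (s : K) (t : K) (agen K a b p₁ p₂) i :=
  congrFun (lift_comp_agen (relations_agen.scaledSwap hst)) i

end ScaledSwap

end Ambiskew

/-- `R(d, c, q₁⁻¹, q₂) ≅ R(c,d,q₁,q₂)` via
`x₁ ↦ q₁·y₃`, `x₂ ↦ y₂`, `x₃ ↦ y₁`, `x₄ ↦ y₄`. -/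
theorem ambiskew_iso_three (K : Type*) [Field K] (c d q₁ q₂ : Kˣ) :
    ∃ Φ : Ambiskew K (d : K) (c : K) ((q₁ : K)⁻¹) (q₂ : K)
        ≃ₐ[K] Ambiskew K (c : K) (d : K) (q₁ : K) (q₂ : K),
      Φ (agen K (d : K) (c : K) ((q₁ : K)⁻¹) (q₂ : K) 0) =
        (q₁ : K) • agen K (c : K) (d : K) (q₁ : K) (q₂ : K) 2 ∧
      Φ (agen K (d : K) (c : K) ((q₁ : K)⁻¹) (q₂ : K) 1) =
        agen K (c : K) (d : K) (q₁ : K) (q₂ : K) 1 ∧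
      Φ (agen K (d : K) (c : K) ((q₁ : K)⁻¹) (q₂ : K) 2) =
        agen K (c : K) (d : K) (q₁ : K) (q₂ : K) 0 ∧
      Φ (agen K (d : K) (c : K) ((q₁ : K)⁻¹) (q₂ : K) 3) =
        agen K (c : K) (d : K) (q₁ : K) (q₂ : K) 3 := by
  have hq : ((q₁ : K) * (1 : Kˣ) : K) = q₁ := by rw [Units.val_one, mul_one]
  have hΦ := Ambiskew.scaledSwapEquiv_agen (c : K) (d : K) (q₂ : K) hq
  exact ⟨Ambiskew.scaledSwapEquiv (c : K) d q₂ hq, hΦ 0, hΦ 1,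
    (hΦ 2).trans (one_smul K _), hΦ 3⟩
end

section
/- Let K be a field of characteristic 0 and let p, q ∈ Kˣ, neither of which is a root of unity. If the quantum Weyl algebras A_1^p(K) and A_1^q(K) are isomorphic as K-algebras, then p = q or p = q⁻¹. -/
/-- The defining relation of the quantum Weyl algebra `A_1^q(K)`:
`x * y = q • (y * x) + 1`, where `x, y` are the two free generators. -/
inductive WeylRel (K : Type*) [Field K] (q : K) :
    FreeAlgebra K (Fin 2) → FreeAlgebra K (Fin 2) → Prop
  | rel : WeylRel K q (FreeAlgebra.ι K 0 * FreeAlgebra.ι K 1)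
      (q • (FreeAlgebra.ι K 1 * FreeAlgebra.ι K 0) + 1)

/-- The quantum Weyl algebra `A_1^q(K)`. -/
abbrev QuantumWeyl (K : Type*) [Field K] (q : K) := RingQuot (WeylRel K q)

/-- The images of the two free generators in `A_1^q(K)`; `wgen K q 0` is `x`
and `wgen K q 1` is `y`. -/
noncomputable def wgen (K : Type*) [Field K] (q : K) (i : Fin 2) : QuantumWeyl K q :=
  RingQuot.mkAlgHom K (WeylRel K q) (FreeAlgebra.ι K i)


/-!
Let `z = xy - yx` in `A_1^q(K)` and suppose `q ≠ 0, 1`. Setting `z = 0` turns `A_1^q(K)` into the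
Laurent polynomials in `T`, the image of `x`, and `x z = q z x`. To first order in `z` this is
recorded by matrices `!![σ f, g; 0, f]` over `K[T;T⁻¹]`, where `σ` is the substitution `T ↦ q T`.

Given an isomorphism `A_1^p(K) ≃ A_1^q(K)`, let `M, N` be the matrices of the generators of
`A_1^p(K)`. They do not commute, and their commutator has a corner entry `h` only, so `x z = p z x`
becomes `σ f * h = p * h * f` for the diagonal entry `f` of `M`, whence `σ f = p f`. Now `f` is a
unit `u T ^ n`, which gives `p = q ^ n`, while the diagonal entries of the whole image lie in
`K[T ^ n, T ^ (-n)]`; since they include `T`, we get `n = 1` or `n = -1`.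

The parameter `1` is recognised by the absence of algebra homomorphisms to `K`.
-/

theorem mul_lie_eq_smul_lie_mul {R A : Type*} [CommSemiring R] [Ring A] [Algebra R A] {q : R}
    {x y : A} (h : x * y = q • (y * x) + 1) : x * ⁅x, y⁆ = q • (⁅x, y⁆ * x) := by
  have hyx : q • (y * x) = x * y - 1 := eq_sub_of_add_eq h.symm
  calc x * ⁅x, y⁆ = x * (x * y - 1) - (x * y - 1) * x := by rw [Ring.lie_def]; noncomm_ring
    _ = x * (q • (y * x)) - q • (y * x) * x := by rw [hyx]
    _ = q • (⁅x, y⁆ * x) := by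
      rw [Ring.lie_def, mul_smul_comm, smul_mul_assoc, ← smul_sub, sub_mul, mul_assoc x y x]

namespace QuantumWeyl

variable {K : Type*} [Field K] {q : K} {B : Type*} [Semiring B] [Algebra K B]

theorem wgen_zero_mul_wgen_one (q : K) :
    wgen K q 0 * wgen K q 1 = q • (wgen K q 1 * wgen K q 0) + 1 := by
  simpa only [wgen, map_mul, map_add, map_smul, map_one] using
    RingQuot.mkAlgHom_rel K (WeylRel.rel (K := K) (q := q))

theorem map_wgen_zero_mul_map_wgen_one (φ : QuantumWeyl K q →ₐ[K] B) :
    φ (wgen K q 0) * φ (wgen K q 1) = q • (φ (wgen K q 1) * φ (wgen K q 0)) + 1 := by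
  simpa only [map_mul, map_add, map_smul, map_one] using congrArg φ (wgen_zero_mul_wgen_one q)

/-- The universal property of `A_1^q(K)`: the algebra homomorphism sending the generators to a
given pair `x, y` satisfying the defining relation. -/
noncomputable def lift (x y : B) (h : x * y = q • (y * x) + 1) : QuantumWeyl K q →ₐ[K] B :=
  RingQuot.liftAlgHom K ⟨FreeAlgebra.lift K ![x, y], by rintro _ _ ⟨⟩; simpa using h⟩

@[simp]
theorem lift_wgen_zero (x y : B) (h : x * y = q • (y * x) + 1) : lift x y h (wgen K q 0) = x := by
  simp [lift, wgen]

@[simp]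
theorem lift_wgen_one (x y : B) (h : x * y = q • (y * x) + 1) : lift x y h (wgen K q 1) = y := by
  simp [lift, wgen]

theorem adjoin_wgen (q : K) : Algebra.adjoin K (Set.range (wgen K q)) = ⊤ := by
  have hrange : Set.range (wgen K q) =
      RingQuot.mkAlgHom K (WeylRel K q) '' Set.range (FreeAlgebra.ι K) := by
    rw [← Set.range_comp]; rfl
  rw [hrange, ← AlgHom.map_adjoin, FreeAlgebra.adjoin_range_ι, Algebra.map_top,
    AlgHom.range_eq_top]
  exact RingQuot.mkAlgHom_surjective K (WeylRel K q)

theorem range_eq_adjoin (φ : QuantumWeyl K q →ₐ[K] B) :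
    φ.range = Algebra.adjoin K {φ (wgen K q 0), φ (wgen K q 1)} := by
  rw [← Algebra.map_top, ← adjoin_wgen, AlgHom.map_adjoin, ← Set.range_comp]
  congr 1
  ext b
  simp [eq_comm]

theorem commute_map (φ : QuantumWeyl K q →ₐ[K] B)
    (h : Commute (φ (wgen K q 0)) (φ (wgen K q 1))) (a b : QuantumWeyl K q) :
    Commute (φ a) (φ b) := by
  have : IsMulCommutative φ.range := by
    rw [range_eq_adjoin]
    apply Algebra.isMulCommutative_adjoin
    rintro _ (rfl | rfl) _ (rfl | rfl)
    exacts [rfl, h, h.symm, rfl]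
  exact setLike_mul_comm (φ.mem_range_self a) (φ.mem_range_self b)

theorem one_sub_smul_map_mul_map {L : Type*} [CommRing L] [Algebra K L]
    (χ : QuantumWeyl K q →ₐ[K] L) : (1 - q) • (χ (wgen K q 0) * χ (wgen K q 1)) = 1 := by
  rw [sub_smul, one_smul, sub_eq_iff_eq_add', mul_comm (χ (wgen K q 0)),
    ← map_wgen_zero_mul_map_wgen_one, mul_comm]

theorem nonempty_algHom_self_iff : Nonempty (QuantumWeyl K q →ₐ[K] K) ↔ q ≠ 1 := by
  constructor
  · rintro ⟨χ⟩ rfl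
    simpa using one_sub_smul_map_mul_map χ
  · intro hq
    have h : (1 - q) * (1 - q)⁻¹ = 1 := mul_inv_cancel₀ (sub_ne_zero.mpr hq.symm)
    exact ⟨lift 1 (1 - q)⁻¹ (by rw [smul_eq_mul]; linear_combination h)⟩

end QuantumWeyl

section TwistedTriangular

variable {R L : Type*}

/-- The matrices `!![σ f, g; 0, f]` over `L`, where `σ` is an endomorphism of `L`. An algebra
homomorphism into this subalgebra is a homomorphism `χ` into `L` together with a
`(σ ∘ χ, χ)`-skew derivation. -/
def twistedTriangular [CommSemiring R] [Semiring L] [Algebra R L] (σ : L →ₐ[R] L) :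
    Subalgebra R (Matrix (Fin 2) (Fin 2) L) where
  carrier := {M | M 1 0 = 0 ∧ M 0 0 = σ (M 1 1)}
  mul_mem' := by
    rintro M N ⟨hM, hM'⟩ ⟨hN, hN'⟩
    simp [Matrix.mul_apply, hM, hM', hN, hN']
  add_mem' := by
    rintro M N ⟨hM, hM'⟩ ⟨hN, hN'⟩
    simp [hM, hM', hN, hN']
  algebraMap_mem' r := by simp [Matrix.algebraMap_matrix_apply]

namespace twistedTriangular

section Semiring

variable [CommSemiring R] [Semiring L] [Algebra R L] {σ : L →ₐ[R] L}

/-- The algebra homomorphism `!![σ f, g; 0, f] ↦ f`. -/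
def diag : twistedTriangular σ →ₐ[R] L where
  toFun M := M.1 1 1
  map_one' := by simp
  map_mul' M N := by simp [Matrix.mul_apply, M.2.1]
  map_zero' := rfl
  map_add' _ _ := rfl
  commutes' r := by simp [Matrix.algebraMap_matrix_apply]

theorem diag_apply (M : twistedTriangular σ) : diag M = M.1 1 1 := rfl

/-- The linear map `!![σ f, g; 0, f] ↦ g`. -/
def corner : twistedTriangular σ →ₗ[R] L where
  toFun M := M.1 0 1
  map_add' _ _ := rfl
  map_smul' _ _ := rfl

theorem corner_apply (M : twistedTriangular σ) : corner M = M.1 0 1 := rfl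

theorem ext {M N : twistedTriangular σ} (hdiag : diag M = diag N) (hcorner : corner M = corner N) :
    M = N := by
  have h11 : M.1 1 1 = N.1 1 1 := hdiag
  apply Subtype.ext
  ext i j
  fin_cases i <;> fin_cases j
  · exact M.2.2.trans ((congrArg σ h11).trans N.2.2.symm)
  · exact hcorner
  · exact M.2.1.trans N.2.1.symm
  · exact h11

theorem corner_mul (M N : twistedTriangular σ) :
    corner (M * N) = σ (diag M) * corner N + corner M * diag N := by
  simp [corner_apply, diag_apply, Matrix.mul_apply, ← M.2.2]

@[simp]
theorem corner_one : corner (1 : twistedTriangular σ) = 0 := by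
  simp [corner_apply]

/-- The matrix `!![σ f, g; 0, f]`. -/
def mk (σ : L →ₐ[R] L) (f g : L) : twistedTriangular σ :=
  ⟨!![σ f, g; 0, f], by constructor <;> simp⟩

@[simp]
theorem diag_mk (f g : L) : diag (mk σ f g) = f := rfl

@[simp]
theorem corner_mk (f g : L) : corner (mk σ f g) = g := rfl

end Semiring

theorem mk_mul_mk_eq_smul_add_one [CommSemiring R] [CommSemiring L] [Algebra R L] {σ : L →ₐ[R] L}
    {q : R} {f g : L} (hσ : σ f = q • f) (hfg : f * g = q • (g * f) + 1) (b : L) :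
    mk σ f 0 * mk σ g b = q • (mk σ g b * mk σ f 0) + 1 := by
  apply ext
  · simpa using hfg
  · simp [corner_mul, hσ, mul_comm]

/-- The commutator `⁅M, N⁆` only has a corner entry, on which multiplication by `M` acts as
`σ (diag M)` from the left and as `diag M` from the right. -/
theorem apply_diag_eq_smul_diag [CommRing R] [CommRing L] [NoZeroDivisors L] [Algebra R L]
    {σ : L →ₐ[R] L} {q : R} {M N : twistedTriangular σ} (h : M * N = q • (N * M) + 1)
    (hMN : ¬ Commute M N) : σ (diag M) = q • diag M := by
  have hdiag : diag ⁅M, N⁆ = 0 := by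
    rw [Ring.lie_def, map_sub, map_mul, map_mul, mul_comm, sub_self]
  have hcorner : corner ⁅M, N⁆ ≠ 0 := fun h0 ↦
    hMN (commute_iff_lie_eq.mpr (ext (hdiag.trans (map_zero _).symm) (h0.trans (map_zero _).symm)))
  apply mul_right_cancel₀ hcorner
  calc σ (diag M) * corner ⁅M, N⁆ = corner (M * ⁅M, N⁆) := by simp [corner_mul, hdiag]
    _ = corner (q • (⁅M, N⁆ * M)) := by rw [mul_lie_eq_smul_lie_mul h]
    _ = q • diag M * corner ⁅M, N⁆ := by simp [corner_mul, hdiag, mul_comm]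

end twistedTriangular

end TwistedTriangular

section Laurent

open LaurentPolynomial

theorem exists_eq_C_mul_T_of_isUnit {R : Type*} [CommRing R] [IsDomain R] {f : R[T;T⁻¹]}
    (hf : IsUnit f) : ∃ (u : Rˣ) (n : ℤ), f = C (u : R) * T n := by
  obtain ⟨g, hfg⟩ := hf.exists_right_inv
  obtain ⟨n, f', hf'⟩ := exists_T_pow f
  obtain ⟨m, g', hg'⟩ := exists_T_pow g
  have hmul : f' * g' = Polynomial.X ^ (n + m) := by
    apply Polynomial.toLaurent_injective
    rw [map_mul, hf', hg', Polynomial.toLaurent_X_pow, mul_mul_mul_comm, hfg, one_mul, ← T_add,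
      Nat.cast_add]
  obtain ⟨i, -, hi⟩ := (dvd_prime_pow Polynomial.prime_X _).mp (Dvd.intro _ hmul)
  obtain ⟨v, hv⟩ := hi.symm
  obtain ⟨c, hc, hcv⟩ := Polynomial.isUnit_iff.mp v.isUnit
  obtain ⟨u, rfl⟩ := hc
  have hfT : f * T n = C (u : R) * T i := by
    rw [← hf', ← hv, ← hcv, map_mul, Polynomial.toLaurent_X_pow, Polynomial.toLaurent_C, T_mul]
  refine ⟨u, i - n, ?_⟩
  rw [T_sub, ← mul_assoc, ← hfT, mul_T_assoc, add_neg_cancel, T_zero, mul_one]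

/-- The subalgebra `R[Tⁿ, T⁻ⁿ]` of `R[T;T⁻¹]`. -/
noncomputable def laurentMultiples (R : Type*) [CommSemiring R] (n : ℤ) : Subalgebra R R[T;T⁻¹] :=
  (AddMonoidAlgebra.mapDomainAlgHom R R (AddMonoidHom.mulLeft n)).range

theorem C_mul_T_mul_mem_laurentMultiples {R : Type*} [CommSemiring R] (r : R) (n k : ℤ) :
    C r * T (n * k) ∈ laurentMultiples R n :=
  ⟨.single k r, by simp [← single_eq_C_mul_T]⟩

theorem isUnit_of_T_one_mem_laurentMultiples {R : Type*} [CommSemiring R] [Nontrivial R] {n : ℤ}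
    (h : T 1 ∈ laurentMultiples R n) : IsUnit n := by
  obtain ⟨f, hf⟩ := h
  have hcoeff : Finsupp.mapDomain (AddMonoidHom.mulLeft n) f.coeff 1 = (T 1 : R[T;T⁻¹]).coeff 1 :=
    congrArg (fun g : R[T;T⁻¹] ↦ g.coeff 1) hf
  have hne : (T 1 : R[T;T⁻¹]).coeff 1 ≠ 0 := by simp
  obtain ⟨k, hk⟩ := Finsupp.mem_range_of_mapDomain_ne_zero (hcoeff.trans_ne hne)
  exact .of_mul_eq_one k hk

/-- The substitution `T ↦ q T`. -/
noncomputable def laurentScale {R : Type*} [CommSemiring R] (q : Rˣ) : R[T;T⁻¹] →ₐ[R] R[T;T⁻¹] :=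
  AddMonoidAlgebra.lift R R[T;T⁻¹] ℤ
    { toFun := fun n ↦ .single n.toAdd ((q ^ n.toAdd : Rˣ) : R)
      map_one' := by rw [toAdd_one, zpow_zero, Units.val_one, AddMonoidAlgebra.one_def]
      map_mul' := fun m n ↦ by
        rw [AddMonoidAlgebra.single_mul_single, toAdd_mul, zpow_add, Units.val_mul] }

theorem laurentScale_C_mul_T {R : Type*} [CommSemiring R] (q : Rˣ) (r : R) (n : ℤ) :
    laurentScale q (C r * T n) = ((q ^ n : Rˣ) : R) • (C r * T n) := by
  rw [← single_eq_C_mul_T, laurentScale, AddMonoidAlgebra.lift_single, MonoidHom.coe_mk,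
    OneHom.coe_mk, toAdd_ofAdd, AddMonoidAlgebra.smul_single, AddMonoidAlgebra.smul_single,
    smul_eq_mul, smul_eq_mul, mul_comm]

theorem laurentScale_T_one {R : Type*} [CommSemiring R] (q : Rˣ) :
    laurentScale q (T 1) = (q : R) • T 1 := by
  simpa using laurentScale_C_mul_T q 1 1

end Laurent

namespace QuantumWeyl

open LaurentPolynomial twistedTriangular

variable {K : Type*} [Field K]

/-- `x` goes to a unit and `y` to a scalar multiple of its inverse, so the image of `χ` is the
span of the powers of that unit. -/
theorem exists_isUnit_map_wgen_zero_eq {p : K} (χ : QuantumWeyl K p →ₐ[K] K[T;T⁻¹])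
    (hχ : T 1 ∈ χ.range) :
    ∃ (u : Kˣ) (n : ℤ), IsUnit n ∧ χ (wgen K p 0) = C (u : K) * T n := by
  set f := χ (wgen K p 0)
  set g := χ (wgen K p 1)
  have hfg : f * (1 - p) • g = 1 := by rw [mul_smul_comm, one_sub_smul_map_mul_map]
  obtain ⟨u, n, hf⟩ := exists_eq_C_mul_T_of_isUnit (.of_mul_eq_one _ hfg)
  have hp : 1 - p ≠ 0 := fun h0 ↦ by simp [h0] at hfg
  have hgf : C (u⁻¹ : K) * T (n * -1) * f = 1 := by
    rw [hf, mul_mul_mul_comm, ← map_mul, ← T_add]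
    simp
  have hg : g = (1 - p)⁻¹ • (C (u⁻¹ : K) * T (n * -1)) := by
    rw [eq_inv_smul_iff₀ hp, left_inv_eq_right_inv hgf hfg]
  have hrange : χ.range ≤ laurentMultiples K n := by
    rw [range_eq_adjoin, Algebra.adjoin_le_iff, Set.pair_subset_iff]
    constructor
    · simpa [f, hf] using C_mul_T_mul_mem_laurentMultiples (u : K) n 1
    · change g ∈ _
      rw [hg]
      exact Subalgebra.smul_mem _ (C_mul_T_mul_mem_laurentMultiples _ n (-1)) _
  exact ⟨u, n, isUnit_of_T_one_mem_laurentMultiples (hrange hχ), hf⟩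

/-- The representation of `A_1^q(K)` whose diagonal part is the quotient map onto `K[T;T⁻¹]`
sending `x` to `T`; the corner entry of the image of `y` only has to be nonzero for the images of
`x` and `y` not to commute. -/
noncomputable def toTwistedTriangular (q : Kˣ) (hq : (q : K) ≠ 1) :
    QuantumWeyl K (q : K) →ₐ[K] twistedTriangular (laurentScale q) :=
  lift (mk _ (T 1) 0) (mk _ ((1 - (q : K))⁻¹ • T (-1)) 1) <| by
    refine mk_mul_mk_eq_smul_add_one (laurentScale_T_one q) ?_ 1
    have hT : (T 1 * T (-1) : K[T;T⁻¹]) = 1 := by rw [← T_add, add_neg_cancel, T_zero]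
    have hinv : (1 - (q : K))⁻¹ = q * (1 - (q : K))⁻¹ + 1 := by
      linear_combination mul_inv_cancel₀ (sub_ne_zero.mpr hq.symm)
    calc T 1 * (1 - (q : K))⁻¹ • T (-1) = (1 - (q : K))⁻¹ • (1 : K[T;T⁻¹]) := by
          rw [mul_smul_comm, hT]
      _ = (q * (1 - (q : K))⁻¹ + 1) • (1 : K[T;T⁻¹]) := by rw [← hinv]
      _ = (q : K) • ((1 - (q : K))⁻¹ • T (-1) * T 1) + 1 := by
          rw [add_smul, one_smul, mul_smul, smul_mul_assoc, mul_comm (T (-1)), hT]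

theorem not_commute_toTwistedTriangular (q : Kˣ) (hq : (q : K) ≠ 1) :
    ¬ Commute (toTwistedTriangular q hq (wgen K q 0)) (toTwistedTriangular q hq (wgen K q 1)) := by
  intro h
  have hcorner : (q : K) • (T 1 : K[T;T⁻¹]) = (1 : K) • T 1 := by
    simpa [toTwistedTriangular, corner_mul, laurentScale_T_one] using congrArg corner h.eq
  exact hq (smul_left_injective K (isUnit_T 1).ne_zero hcorner)

theorem eq_or_eq_inv_of_surjective {p q : K} (hq0 : q ≠ 0) (hq1 : q ≠ 1)
    (φ : QuantumWeyl K p →ₐ[K] QuantumWeyl K q) (hφ : Function.Surjective φ) :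
    p = q ∨ p = q⁻¹ := by
  lift q to Kˣ using hq0.isUnit
  let ψ := (toTwistedTriangular q hq1).comp φ
  obtain ⟨a, ha⟩ := hφ (wgen K q 0)
  obtain ⟨b, hb⟩ := hφ (wgen K q 1)
  have hψ : ¬ Commute (ψ (wgen K p 0)) (ψ (wgen K p 1)) := fun h ↦
    not_commute_toTwistedTriangular q hq1 (ha ▸ hb ▸ commute_map ψ h a b)
  obtain ⟨u, n, hn, hx⟩ := exists_isUnit_map_wgen_zero_eq (diag.comp ψ)
    ⟨a, by simp [ψ, ha, toTwistedTriangular]⟩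
  have hscale : ((q ^ n : Kˣ) : K) • (C (u : K) * T n) = p • (C (u : K) * T n) := by
    rw [← laurentScale_C_mul_T, ← hx]
    exact apply_diag_eq_smul_diag (map_wgen_zero_mul_map_wgen_one ψ) hψ
  have hne : (C (u : K) * T n : K[T;T⁻¹]) ≠ 0 :=
    ((u.isUnit.map C).mul (isUnit_T n)).ne_zero
  have hp : ((q ^ n : Kˣ) : K) = p := smul_left_injective K hne hscale
  rcases Int.isUnit_iff.mp hn with rfl | rfl
  · exact .inl (by simpa using hp.symm)
  · exact .inr (by simpa using hp.symm)

end QuantumWeyl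

theorem quantumWeyl_iso_nonroot_general {K : Type*} [Field K] {p q : K}
    (h : Nonempty (QuantumWeyl K p ≃ₐ[K] QuantumWeyl K q)) : p = q ∨ p = q⁻¹ := by
  obtain ⟨e⟩ := h
  have hone : p ≠ 1 ↔ q ≠ 1 := by
    rw [← QuantumWeyl.nonempty_algHom_self_iff, ← QuantumWeyl.nonempty_algHom_self_iff]
    exact ⟨.map (AlgHom.comp · e.symm), .map (AlgHom.comp · e)⟩
  rcases eq_or_ne q 1 with hq1 | hq1
  · exact .inl ((not_ne_iff.mp fun hp1 ↦ hone.mp hp1 hq1).trans hq1.symm)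
  rcases eq_or_ne q 0 with hq0 | hq0
  · rcases eq_or_ne p 0 with hp0 | hp0
    · exact .inl (hp0.trans hq0.symm)
    · exact (QuantumWeyl.eq_or_eq_inv_of_surjective hp0 (hone.mpr hq1) e.symm e.symm.surjective).imp
        Eq.symm fun hq ↦ by rw [hq, inv_inv]
  · exact QuantumWeyl.eq_or_eq_inv_of_surjective hq0 hq1 e e.surjective

/-- for `p, q` non-roots of unity, `A_1^p(K) ≅ A_1^q(K)` implies
`p = q` or `p = q⁻¹`. -/
theorem quantumWeyl_iso_nonroot (K : Type*) [Field K] [CharZero K] (p q : Kˣ)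
    (hp : ∀ n : ℕ, 0 < n → p ^ n ≠ 1) (hq : ∀ n : ℕ, 0 < n → q ^ n ≠ 1)
    (h : Nonempty (QuantumWeyl K (p : K) ≃ₐ[K] QuantumWeyl K (q : K))) :
    p = q ∨ p = q⁻¹ := by
  simpa [Units.ext_iff] using quantumWeyl_iso_nonroot_general h
end
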